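/- arXiv:2104.05885 — 2 statements merged into one kernel-verified Lean document; each statement's English description precedes it below -/
import Mathlib

section
/- Let G be an ample groupoid with compact unit space whose dynamic asymptotic dimension is at most d. Then for every compact open subset K ⊆ G there exists a K-Lebesgue colouring of G with at most d + 1 elements. -/
noncomputable section

open Function Set

attribute [local instance] Classical.propDecidable

universe u v w

/-- `ℤ[Y]`: the set of compactly supported continuous `ℤ`-valued functions on a space `Y`
(`ℤ` carries the discrete topology). -/
def ccZ (Y : Type v) [TopologicalSpace Y] : Set (Y → ℤ) :=
  {f | Continuous f ∧ HasCompactSupport f}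

/-- `ℤ[Y]` as an additive subgroup of the group of all functions `Y → ℤ`. -/
def ccZSub (Y : Type v) [TopologicalSpace Y] : AddSubgroup (Y → ℤ) where
  carrier := ccZ Y
  add_mem' {a b} ha hb := ⟨ha.1.add hb.1, ha.2.add hb.2⟩
  zero_mem' := ⟨continuous_const, by
    have h : tsupport (0 : Y → ℤ) = ∅ := by simp [tsupport]
    unfold HasCompactSupport
    rw [h]; exact isCompact_empty⟩
  neg_mem' {a} ha := ⟨ha.1.neg, ha.2.neg⟩

@[simp] lemma mem_ccZSub {Y : Type v} [TopologicalSpace Y] (f : Y → ℤ) :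
    f ∈ ccZSub Y ↔ f ∈ ccZ Y := Iff.rfl

/-- The pushforward `φ_*(a)(y) = ∑_{x ∈ φ⁻¹(y)} a x` of a function along a map. -/
def pushf {X : Type v} {Y : Type w} (φ : X → Y) (a : X → ℤ) : Y → ℤ :=
  fun y => ∑ᶠ x ∈ φ ⁻¹' {y}, a x

/-- The generated equivalence relation. -/
inductive RelGen {α : Sort*} (r : α → α → Prop) : α → α → Prop
  | rel {x y} : r x y → RelGen r x y
  | refl (x) : RelGen r x x
  | symm {x y} : RelGen r x y → RelGen r y x
  | trans {x y z} : RelGen r x y → RelGen r y z → RelGen r x z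

/-- The purely algebraic data of a topological groupoid, with arrow space `G`:
the set of units, source and range maps (valued in units), a (junk-total)
partially defined composition, and inversion. -/
structure GroupoidData (G : Type u) where
  unitSpace : Set G
  source : G → G
  range : G → G
  mul : G → G → G
  inv : G → G

namespace GroupoidData

variable {G : Type u} (D : GroupoidData G)

/-- The product of two subsets of a groupoid. -/
def setMul (A B : Set G) : Set G :=
  {w | ∃ a ∈ A, ∃ b ∈ B, D.source a = D.range b ∧ w = D.mul a b}

/-- A bisection: a subset on which both the source and the range map are injective. -/
def IsBisection (B : Set G) : Prop := Set.InjOn D.source B ∧ Set.InjOn D.range B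

/-- Membership in the subgroupoid generated by a subset `A` of `G`. -/
inductive InSubgroupoid (A : Set G) : G → Prop
  | base {g} : g ∈ A → InSubgroupoid A g
  | inv {g} : InSubgroupoid A g → InSubgroupoid A (D.inv g)
  | mul {g h} : InSubgroupoid A g → InSubgroupoid A h → D.source g = D.range h →
      InSubgroupoid A (D.mul g h)

/-- `G` is a (locally compact, Hausdorff, étale) ample groupoid: all the algebraic groupoid
axioms hold, the structure maps are suitably continuous, the source and range maps are local
homeomorphisms onto the open unit space (étaleness), and the compact open bisections form a
basis for the topology (ampleness). -/
structure IsAmpleGroupoid [TopologicalSpace G] : Prop where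
  t2 : T2Space G
  locallyCompact : LocallyCompactSpace G
  source_mem : ∀ g, D.source g ∈ D.unitSpace
  range_mem : ∀ g, D.range g ∈ D.unitSpace
  source_unit : ∀ x ∈ D.unitSpace, D.source x = x
  range_unit : ∀ x ∈ D.unitSpace, D.range x = x
  source_mul : ∀ g h, D.source g = D.range h → D.source (D.mul g h) = D.source h
  range_mul : ∀ g h, D.source g = D.range h → D.range (D.mul g h) = D.range g
  mul_assoc : ∀ g h k, D.source g = D.range h → D.source h = D.range k →
      D.mul (D.mul g h) k = D.mul g (D.mul h k)
  source_inv : ∀ g, D.source (D.inv g) = D.range g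
  range_inv : ∀ g, D.range (D.inv g) = D.source g
  inv_mul : ∀ g, D.mul (D.inv g) g = D.source g
  mul_inv : ∀ g, D.mul g (D.inv g) = D.range g
  unit_mul : ∀ g, D.mul (D.range g) g = g
  mul_unit : ∀ g, D.mul g (D.source g) = g
  continuous_inv : Continuous D.inv
  continuous_mul : Continuous fun p : {p : G × G // D.source p.1 = D.range p.2} =>
      D.mul p.1.1 p.1.2
  open_unitSpace : IsOpen D.unitSpace
  etale_source : IsLocalHomeomorph D.source
  etale_range : IsLocalHomeomorph D.range
  ample : ∀ g : G, ∀ U : Set G, IsOpen U → g ∈ U →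
      ∃ B : Set G, g ∈ B ∧ B ⊆ U ∧ IsOpen B ∧ IsCompact B ∧ D.IsBisection B

/-- A groupoid is principal if every arrow with equal range and source is a unit. -/
def IsPrincipal : Prop := ∀ g, D.source g = D.range g → g ∈ D.unitSpace

/-- `G` has dynamic asymptotic dimension at most `d`: for every relatively compact open
subset `K` of `G` there are `d+1` open subsets of the unit space covering `r(K) ∪ s(K)` such
that the subgroupoid generated by the elements of `K` with source and range in one of these
sets is relatively compact. -/
def DadLE [TopologicalSpace G] (d : ℕ) : Prop :=
  ∀ K : Set G, IsOpen K → IsCompact (closure K) →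
    ∃ U : Fin (d + 1) → Set G,
      (∀ i, IsOpen (U i) ∧ U i ⊆ D.unitSpace) ∧
      (D.range '' K ∪ D.source '' K ⊆ ⋃ i, U i) ∧
      ∀ i, IsCompact (closure
        {g | D.InSubgroupoid {g ∈ K | D.source g ∈ U i ∧ D.range g ∈ U i} g})

/-! ### Matui's complex computing the Crainic–Moerdijk groupoid homology `H_*(G)` -/

/-- The space `G^(n)` of composable `n`-tuples. -/
def Comps (n : ℕ) : Set (Fin n → G) :=
  {v | ∀ (j : Fin n) (h : (j : ℕ) + 1 < n), D.source (v j) = D.range (v ⟨(j : ℕ) + 1, h⟩)}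

/-- The face maps of Matui's complex on tuples:
`d_0` drops the first entry, `d_{n+1}` drops the last one, and the intermediate
`d_i` compose two consecutive entries. -/
def dface (n : ℕ) (i : Fin (n + 2)) (v : Fin (n + 1) → G) : Fin n → G := fun j =>
  if (j : ℕ) + 1 < (i : ℕ) then v j.castSucc
  else if (j : ℕ) + 1 = (i : ℕ) then D.mul (v j.castSucc) (v j.succ)
  else v j.succ

/-- The spaces of Matui's complex: `G^0` in degree `0`, and `G^(n)` in degree `n ≥ 1`. -/
def MSp : ℕ → Type u
  | 0 => ↥(D.unitSpace)
  | (n + 1) => ↥(D.Comps (n + 1))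

instance [TopologicalSpace G] (n : ℕ) : TopologicalSpace (D.MSp n) := by
  cases n with
  | zero => exact (inferInstance : TopologicalSpace ↥(D.unitSpace))
  | succ n => exact (inferInstance : TopologicalSpace ↥(D.Comps (n + 1)))

/-- The boundary maps of Matui's complex, given by alternating sums of pushforwards
along the face maps (in degree one, `∂₁ = s_* - r_*`). -/
def mBdry : (n : ℕ) → ((D.MSp (n + 1)) → ℤ) → (D.MSp n) → ℤ
  | 0, a => fun u =>
      (∑ᶠ x ∈ {x : ↥(D.Comps 1) | D.source (x.1 0) = u.1}, a x)
        - ∑ᶠ x ∈ {x : ↥(D.Comps 1) | D.range (x.1 0) = u.1}, a x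
  | (n + 1), a => fun y =>
      ∑ i : Fin (n + 3), (-1 : ℤ) ^ (i : ℕ) *
        ∑ᶠ x ∈ {x : ↥(D.Comps (n + 2)) | D.dface (n + 1) i x.1 = y.1}, a x

variable [TopologicalSpace G]

/-- The cycle subgroup of Matui's complex in degree `n`. -/
def mCycles : (n : ℕ) → AddSubgroup ((D.MSp n) → ℤ)
  | 0 => ccZSub (D.MSp 0)
  | (n + 1) => AddSubgroup.closure {a | a ∈ ccZ (D.MSp (n + 1)) ∧ D.mBdry n a = 0}

/-- The boundary subgroup of Matui's complex in degree `n`. -/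
def mBdries (n : ℕ) : AddSubgroup ((D.MSp n) → ℤ) :=
  AddSubgroup.closure {c | ∃ a ∈ ccZ (D.MSp (n + 1)), D.mBdry n a = c}

/-- The groupoid homology `H_n(G)` (Crainic–Moerdijk homology, computed by Matui's complex). -/
def Homology (n : ℕ) : Type u :=
  (D.mCycles n) ⧸ AddSubgroup.comap (D.mCycles n).subtype (D.mBdries n)

instance (n : ℕ) : AddCommGroup (D.Homology n) :=
  QuotientAddGroup.Quotient.addCommGroup _

/-- The homology class of a cycle. -/
def hcls {n : ℕ} (a : (D.MSp n) → ℤ) (ha : a ∈ D.mCycles n) : D.Homology n :=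
  QuotientAddGroup.mk ⟨a, ha⟩

end GroupoidData
namespace GroupoidData

variable {G : Type u} {D : GroupoidData G}
variable (D) in

/-- A colouring of an ample groupoid `G` with compact unit space: a finite ordered
collection `(G_0, …, G_d)` of compact open subgroupoids whose unit spaces cover `G⁰`. -/
structure Colouring [TopologicalSpace G] (d : ℕ) where
  sub : Fin (d + 1) → Set G
  isCompact : ∀ i, IsCompact (sub i)
  isOpen : ∀ i, IsOpen (sub i)
  inv_mem : ∀ i, ∀ g ∈ sub i, D.inv g ∈ sub i
  mul_mem : ∀ i, ∀ g h, g ∈ sub i → h ∈ sub i → D.source g = D.range h → D.mul g h ∈ sub i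
  source_mem : ∀ i, ∀ g ∈ sub i, D.source g ∈ sub i
  range_mem : ∀ i, ∀ g ∈ sub i, D.range g ∈ sub i
  covers : D.unitSpace ⊆ ⋃ i, (sub i ∩ D.unitSpace)

/-- A colouring is `K`-Lebesgue if for every unit `x` some colour `G_i` contains `G^x ∩ K`. -/
def Colouring.IsLebesgue [TopologicalSpace G] {D : GroupoidData G} {d : ℕ}
    (C : D.Colouring d) (K : Set G) : Prop :=
  ∀ x ∈ D.unitSpace, ∃ i, {g | D.range g = x} ∩ K ⊆ C.sub i

/-- A colouring is `K`-bounded if every colour is contained in `K`. -/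
def Colouring.IsBounded [TopologicalSpace G] {D : GroupoidData G} {d : ℕ}
    (C : D.Colouring d) (K : Set G) : Prop :=
  ∀ i, C.sub i ⊆ K

end GroupoidData
namespace GroupoidData

section LebesgueAux

variable {G : Type u} {D : GroupoidData G}

lemma aux_inv_inv [TopologicalSpace G] (h : D.IsAmpleGroupoid) (g : G) :
    D.inv (D.inv g) = g := by
  have e1 := h.mul_unit (D.inv (D.inv g))
  rw [h.source_inv, h.range_inv, ← h.inv_mul g, ← h.mul_assoc _ _ _ (h.source_inv _)
    (h.source_inv _), h.inv_mul (D.inv g), h.source_inv, h.unit_mul] at e1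
  exact e1.symm

lemma aux_inv_mul_cancel [TopologicalSpace G] (h : D.IsAmpleGroupoid) (a g : G)
    (e : D.source a = D.range g) : D.mul (D.inv a) (D.mul a g) = g := by
  rw [← h.mul_assoc _ _ _ (h.source_inv _) e, h.inv_mul, e, h.unit_mul]

lemma aux_mul_inv_cancel [TopologicalSpace G] (h : D.IsAmpleGroupoid) (g a : G)
    (e : D.source g = D.range a) : D.mul (D.mul g a) (D.inv a) = g := by
  rw [h.mul_assoc _ _ _ e (h.range_inv _).symm, h.mul_inv, ← e, h.mul_unit]

lemma aux_mul_inv_cancel_mid [TopologicalSpace G] (h : D.IsAmpleGroupoid) (g a : G)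
    (e : D.source g = D.source a) : D.mul (D.mul g (D.inv a)) a = g := by
  rw [h.mul_assoc _ _ _ (e.trans (h.range_inv _).symm) (h.source_inv _), h.inv_mul, ← e,
    h.mul_unit]

lemma aux_mul_inv_rev [TopologicalSpace G] (h : D.IsAmpleGroupoid) (g a : G)
    (e : D.source g = D.range a) : D.inv (D.mul g a) = D.mul (D.inv a) (D.inv g) := by
  have e0 : D.source (D.inv a) = D.range (D.inv g) := by rw [h.source_inv, h.range_inv, e]
  have e1 : D.mul (D.mul g a) (D.mul (D.inv a) (D.inv g)) = D.range g := by
    rw [← h.mul_assoc _ _ _ (by rw [h.source_mul _ _ e, h.range_inv]) e0,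
      aux_mul_inv_cancel h g a e, h.mul_inv]
  have e2 := aux_inv_mul_cancel h (D.mul g a) (D.mul (D.inv a) (D.inv g))
    (by rw [h.source_mul _ _ e, h.range_mul _ _ e0, h.range_inv])
  rw [e1] at e2
  rw [← e2, ← h.range_mul _ _ e, ← h.source_inv, h.mul_unit]

lemma aux_continuousOn_mul [TopologicalSpace G] (h : D.IsAmpleGroupoid) {X : Type*}
    [TopologicalSpace X] {f g : X → G} {S : Set X} (hf : ContinuousOn f S)
    (hg : ContinuousOn g S) (e : ∀ x ∈ S, D.source (f x) = D.range (g x)) :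
    ContinuousOn (fun x => D.mul (f x) (g x)) S := by
  rw [continuousOn_iff_continuous_domRestrict] at *
  have : Continuous (fun x : S =>
      (⟨(f x, g x), e x x.2⟩ : {p : G × G // D.source p.1 = D.range p.2})) :=
    (hf.prodMk hg).subtype_mk _
  exact h.continuous_mul.comp this

lemma aux_isCompact_setMul [TopologicalSpace G] (h : D.IsAmpleGroupoid) {A B : Set G}
    (hA : IsCompact A) (hB : IsCompact B) : IsCompact (D.setMul A B) := by
  have := h.t2
  have hc : IsClosed {p : G × G | D.source p.1 = D.range p.2} :=
    isClosed_eq (h.etale_source.continuous.comp continuous_fst)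
      (h.etale_range.continuous.comp continuous_snd)
  have h1 : IsCompact ((A ×ˢ B) ∩ {p : G × G | D.source p.1 = D.range p.2}) :=
    (hA.prod hB).inter_right hc
  have h2 := h1.image_of_continuousOn (f := fun p => D.mul p.1 p.2)
    (aux_continuousOn_mul h (f := fun p : G × G => p.1) (g := fun p : G × G => p.2)
      continuous_fst.continuousOn continuous_snd.continuousOn
      (fun x hx => hx.2))
  convert h2 using 1
  ext w
  constructor
  · rintro ⟨a, ha, b, hb, e, rfl⟩
    exact ⟨(a, b), ⟨⟨ha, hb⟩, e⟩, rfl⟩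
  · rintro ⟨⟨a, b⟩, ⟨⟨ha, hb⟩, e⟩, rfl⟩
    exact ⟨a, ha, b, hb, e, rfl⟩

lemma aux_isOpen_setMul [TopologicalSpace G] (h : D.IsAmpleGroupoid) {A B : Set G}
    (hA : IsOpen A) (hB : IsOpen B) : IsOpen (D.setMul A B) := by
  rw [isOpen_iff_mem_nhds]
  rintro w ⟨a, ha, b, hb, e, rfl⟩
  obtain ⟨φ, hbφ, hφ⟩ := h.etale_source b
  have hφ' : ∀ z, φ z = D.source z := fun z => by rw [hφ]
  have hsw : D.source (D.mul a b) = φ b := by rw [h.source_mul _ _ e, hφ']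
  let O : Set G := D.source ⁻¹' φ.target
  have hO : IsOpen O := φ.open_target.preimage h.etale_source.continuous
  have hwO : D.mul a b ∈ O := by
    change D.source (D.mul a b) ∈ φ.target
    rw [hsw]; exact φ.map_source hbφ
  have hσ : ContinuousOn (fun z => φ.symm (D.source z)) O :=
    φ.continuousOn_symm.comp h.etale_source.continuous.continuousOn (fun z hz => hz)
  have hsσ : ∀ z ∈ O, D.source (φ.symm (D.source z)) = D.source z := fun z hz => by
    rw [← hφ', φ.right_inv hz]
  have hτ : ContinuousOn (fun z => D.mul z (D.inv (φ.symm (D.source z)))) O :=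
    aux_continuousOn_mul h continuousOn_id (h.continuous_inv.comp_continuousOn hσ)
      (fun z hz => by rw [h.range_inv, hsσ z hz])
  have hσw : φ.symm (D.source (D.mul a b)) = b := by rw [hsw, φ.left_inv hbφ]
  have n1 : ∀ᶠ z in nhds (D.mul a b), φ.symm (D.source z) ∈ B :=
    (hσ.continuousAt (hO.mem_nhds hwO)).eventually_mem (by
      simp only [hσw]; exact hB.mem_nhds hb)
  have n2 : ∀ᶠ z in nhds (D.mul a b), D.mul z (D.inv (φ.symm (D.source z))) ∈ A :=
    (hτ.continuousAt (hO.mem_nhds hwO)).eventually_mem (by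
      simp only [hσw]; rw [aux_mul_inv_cancel h a b e]; exact hA.mem_nhds ha)
  filter_upwards [n1, n2, hO.mem_nhds hwO] with z h1 h2 h3
  refine ⟨_, h2, _, h1, ?_, ?_⟩
  · rw [h.source_mul _ _ (by rw [h.range_inv, hsσ z h3]), h.source_inv]
  · rw [aux_mul_inv_cancel_mid h _ _ (hsσ z h3).symm]

lemma aux_fibre_bound [TopologicalSpace G] (h : D.IsAmpleGroupoid) {C : Set G}
    (hC : IsCompact C) : ∃ N : ℕ, ∀ x, (C ∩ {g | D.range g = x}).encard ≤ N := by
  refine hC.induction_on (p := fun C => ∃ N : ℕ, ∀ x, (C ∩ {g | D.range g = x}).encard ≤ N)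
    ⟨0, by simp⟩ ?_ ?_ ?_
  · rintro s t hst ⟨N, hN⟩
    exact ⟨N, fun x => (Set.encard_le_encard (Set.inter_subset_inter_left _ hst)).trans (hN x)⟩
  · rintro s t ⟨N, hN⟩ ⟨M, hM⟩
    refine ⟨N + M, fun x => ?_⟩
    rw [Set.union_inter_distrib_right]
    refine (Set.encard_union_le _ _).trans ?_
    push_cast
    exact add_le_add (hN x) (hM x)
  · intro g _
    obtain ⟨B, hgB, -, hBo, -, hB⟩ := h.ample g Set.univ isOpen_univ trivial
    refine ⟨B, mem_nhdsWithin_of_mem_nhds (hBo.mem_nhds hgB), 1, fun x => ?_⟩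
    simp only [Nat.cast_one]
    rw [Set.encard_le_one_iff]
    rintro a b ⟨ha, ha'⟩ ⟨hb, hb'⟩
    exact hB.2 ha hb (ha'.trans hb'.symm)

lemma aux_shrink [TopologicalSpace G] (h : D.IsAmpleGroupoid) {ι : Type*} {X : Set G}
    (hX : IsCompact X) (U : ι → Set G) (hU : ∀ i, IsOpen (U i)) (hc : X ⊆ ⋃ i, U i) :
    ∃ V : ι → Set G, (∀ i, IsCompact (V i) ∧ IsOpen (V i) ∧ V i ⊆ U i) ∧ X ⊆ ⋃ i, V i := by
  refine hX.induction_on (p := fun X => ∃ V : ι → Set G,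
    (∀ i, IsCompact (V i) ∧ IsOpen (V i) ∧ V i ⊆ U i) ∧ X ⊆ ⋃ i, V i)
    ⟨fun _ => ∅, by simp, by simp⟩ ?_ ?_ ?_
  · rintro s t hst ⟨V, hV, hs⟩
    exact ⟨V, hV, hst.trans hs⟩
  · rintro s t ⟨V, hV, hs⟩ ⟨W, hW, ht⟩
    refine ⟨fun i => V i ∪ W i, fun i => ⟨(hV i).1.union (hW i).1, (hV i).2.1.union (hW i).2.1,
      Set.union_subset (hV i).2.2 (hW i).2.2⟩, ?_⟩
    rw [Set.iUnion_union_distrib]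
    exact Set.union_subset_union hs ht
  · intro x hx
    obtain ⟨i, hi⟩ := Set.mem_iUnion.1 (hc hx)
    obtain ⟨B, hxB, hBU, hBo, hBc, -⟩ := h.ample x (U i) (hU i) hi
    refine ⟨B, mem_nhdsWithin_of_mem_nhds (hBo.mem_nhds hxB),
      fun j => if j = i then B else ∅, fun j => ?_, ?_⟩
    · by_cases hj : j = i
      · subst hj; simp [hBo, hBc, hBU]
      · simp [hj]
    · intro y hy
      exact Set.mem_iUnion.2 ⟨i, by simpa using hy⟩

/-- Products of at most `n + 1` elements of `A`. -/
def auxPow (D : GroupoidData G) (A : Set G) : ℕ → Set G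
  | 0 => A
  | (n + 1) => D.setMul (auxPow D A n) A

lemma auxPow_mul [TopologicalSpace G] (h : D.IsAmpleGroupoid) {A : Set G} (n m : ℕ) :
    ∀ g k, g ∈ auxPow D A n → k ∈ auxPow D A m → D.source g = D.range k →
      D.mul g k ∈ auxPow D A (n + m + 1) := by
  induction m with
  | zero => exact fun g k hg hk e => ⟨g, hg, k, hk, e, rfl⟩
  | succ m ih =>
    rintro g _ hg ⟨k, hk, a, ha, e', rfl⟩ e
    rw [h.range_mul _ _ e'] at e
    refine ⟨D.mul g k, ih g k hg hk e, a, ha, ?_, ?_⟩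
    · rw [h.source_mul _ _ e, e']
    · rw [h.mul_assoc _ _ _ e e']

lemma auxPow_inv [TopologicalSpace G] (h : D.IsAmpleGroupoid) {A : Set G}
    (hA : ∀ a ∈ A, D.inv a ∈ A) (n : ℕ) :
    ∀ g ∈ auxPow D A n, D.inv g ∈ ⋃ m, auxPow D A m := by
  induction n with
  | zero => exact fun g hg => Set.mem_iUnion.2 ⟨0, hA g hg⟩
  | succ n ih =>
    rintro _ ⟨g, hg, a, ha, e, rfl⟩
    rw [aux_mul_inv_rev h _ _ e]
    obtain ⟨m, hm⟩ := Set.mem_iUnion.1 (ih g hg)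
    exact Set.mem_iUnion.2 ⟨0 + m + 1, auxPow_mul h 0 m _ _ (hA a ha) hm
      (by rw [h.source_inv, h.range_inv, e])⟩

lemma auxPow_open [TopologicalSpace G] (h : D.IsAmpleGroupoid) {A : Set G}
    (hA : IsOpen A) (n : ℕ) : IsOpen (auxPow D A n) := by
  induction n with
  | zero => exact hA
  | succ n ih => exact aux_isOpen_setMul h ih hA

lemma auxPow_compact [TopologicalSpace G] (h : D.IsAmpleGroupoid) {A : Set G}
    (hA : IsCompact A) (n : ℕ) : IsCompact (auxPow D A n) := by
  induction n with
  | zero => exact hA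
  | succ n ih => exact aux_isCompact_setMul h ih hA

lemma auxPow_source [TopologicalSpace G] (h : D.IsAmpleGroupoid) {A : Set G}
    (hA : ∀ a ∈ A, D.source a ∈ A) (n : ℕ) : ∀ g ∈ auxPow D A n, D.source g ∈ A := by
  induction n with
  | zero => exact hA
  | succ n ih =>
    rintro _ ⟨g, hg, a, ha, e, rfl⟩
    rw [h.source_mul _ _ e]; exact hA a ha

lemma auxPow_range [TopologicalSpace G] (h : D.IsAmpleGroupoid) {A : Set G}
    (hA : ∀ a ∈ A, D.range a ∈ A) (n : ℕ) : ∀ g ∈ auxPow D A n, D.range g ∈ A := by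
  induction n with
  | zero => exact hA
  | succ n ih =>
    rintro _ ⟨g, hg, a, ha, e, rfl⟩
    rw [h.range_mul _ _ e]; exact ih g hg

lemma auxPow_mono [TopologicalSpace G] (h : D.IsAmpleGroupoid) {A : Set G}
    (hA : ∀ a ∈ A, D.source a ∈ A) : Monotone (auxPow D A) := by
  refine monotone_nat_of_le_succ fun n g hg => ?_
  exact ⟨g, hg, D.source g, auxPow_source h hA n g hg,
    (h.range_unit _ (h.source_mem g)).symm, (h.mul_unit g).symm⟩

/-- If the powers lie in a fixed compact set, they stabilise. -/
lemma auxPow_stab [TopologicalSpace G] (h : D.IsAmpleGroupoid) {A C : Set G}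
    (hA : ∀ a ∈ A, D.source a ∈ A) (hC : IsCompact C) (hAC : ∀ n, auxPow D A n ⊆ C) :
    ∃ N, (⋃ n, auxPow D A n) = auxPow D A N := by
  obtain ⟨N, hN⟩ := aux_fibre_bound h hC
  have hmono := auxPow_mono h hA
  refine ⟨N, Set.Subset.antisymm ?_ (Set.subset_iUnion _ N)⟩
  intro g hg
  obtain ⟨m, hm⟩ := Set.mem_iUnion.1 hg
  set F : ℕ → Set G := fun n => auxPow D A n ∩ {k | D.range k = D.range g} with hF
  have key : ∀ n, F (n + 1) ⊆ F n → F (n + 2) ⊆ F (n + 1) := by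
    rintro n hn _ ⟨⟨k, hk, a, ha, e, rfl⟩, hr⟩
    have hr' : D.range k = D.range g := by rw [← h.range_mul _ _ e]; exact hr
    exact ⟨⟨k, (hn ⟨hk, hr'⟩).1, a, ha, e, rfl⟩, hr⟩
  have key2 : ∀ n, F (n + 1) ⊆ F n → ∀ j, F (n + j + 1) ⊆ F (n + j) := by
    intro n hn j
    induction j with
    | zero => exact hn
    | succ j ih => exact key _ ih
  have key3 : ∀ n, F (n + 1) ⊆ F n → ∀ j, F (n + j) ⊆ F n := by
    intro n hn j
    induction j with
    | zero => exact subset_rfl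
    | succ j ih => exact (key2 n hn j).trans ih
  by_contra hgN
  have hns : ∀ n ≤ N, ¬ F (n + 1) ⊆ F n := by
    intro n hn hsub
    have h1 : g ∈ F (n + m) := ⟨hmono (Nat.le_add_left m n) hm, rfl⟩
    exact hgN (hmono hn (key3 n hsub m h1).1)
  have hfin : ∀ n, (F n).encard ≤ N := fun n =>
    (Set.encard_le_encard (Set.inter_subset_inter_left _ (hAC n))).trans (hN _)
  have hcard : ∀ n ≤ N + 1, (n : ℕ∞) ≤ (F n).encard := by
    intro n
    induction n with
    | zero => intro _; simp
    | succ n ih =>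
      intro hn
      have hss : F n ⊂ F (n + 1) :=
        ⟨Set.inter_subset_inter_left _ (hmono (Nat.le_succ n)), hns n (by omega)⟩
      have hf : (F n).Finite :=
        Set.finite_of_encard_le_coe (hfin n)
      have hlt := hf.encard_lt_encard hss
      push_cast
      exact (add_le_add_left (ih (by omega)) 1).trans (Order.add_one_le_of_lt hlt)
  have := (hcard (N + 1) le_rfl).trans (hfin (N + 1))
  have h3 : N + 1 ≤ N := by exact_mod_cast this
  omega

lemma aux_main [TopologicalSpace G] (h : D.IsAmpleGroupoid) {K U V : Set G}
    (hKc : IsCompact K) (hKo : IsOpen K) (hKu : D.unitSpace ⊆ K)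
    (hKi : ∀ g ∈ K, D.inv g ∈ K)
    (hVc : IsCompact V) (hVo : IsOpen V) (hVU : V ⊆ U) (hU : U ⊆ D.unitSpace)
    (hH : IsCompact (closure {g | D.InSubgroupoid
      {g ∈ D.setMul (D.setMul K K) K | D.source g ∈ U ∧ D.range g ∈ U} g})) :
    ∃ S : Set G, IsCompact S ∧ IsOpen S ∧ (∀ g ∈ S, D.inv g ∈ S) ∧
      (∀ g k, g ∈ S → k ∈ S → D.source g = D.range k → D.mul g k ∈ S) ∧
      (∀ g ∈ S, D.source g ∈ S) ∧ (∀ g ∈ S, D.range g ∈ S) ∧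
      V ⊆ S ∧ (∀ g ∈ K, D.range g ∈ V → g ∈ S) := by
  have := h.t2
  have hsc := h.etale_source.continuous
  have hrc := h.etale_range.continuous
  set Hs : Set G := {g | D.InSubgroupoid
      {g ∈ D.setMul (D.setMul K K) K | D.source g ∈ U ∧ D.range g ∈ U} g} with hHs
  let W : Set G := D.source '' (K ∩ D.range ⁻¹' V)
  have hWo : IsOpen W :=
    h.etale_source.isOpenMap _ (hKo.inter (hVo.preimage hrc))
  have hWc : IsCompact W :=
    (hKc.inter_right (hVc.isClosed.preimage hrc)).image hsc
  have hWu : W ⊆ D.unitSpace := by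
    rintro _ ⟨g, -, rfl⟩; exact h.source_mem g
  have hVW : V ⊆ W := fun x hx => by
    have hx' := hU (hVU hx)
    refine ⟨x, ⟨hKu hx', ?_⟩, h.source_unit x hx'⟩
    change D.range x ∈ V
    rwa [h.range_unit x hx']
  let A : Set G := K ∩ (D.source ⁻¹' W ∩ D.range ⁻¹' W)
  have hAo : IsOpen A := hKo.inter ((hWo.preimage hsc).inter (hWo.preimage hrc))
  have hAc : IsCompact A :=
    hKc.inter_right ((hWc.isClosed.preimage hsc).inter (hWc.isClosed.preimage hrc))
  have hWA : W ⊆ A := fun x hx => by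
    refine ⟨hKu (hWu hx), ?_, ?_⟩
    · change D.source x ∈ W
      rwa [h.source_unit x (hWu hx)]
    · change D.range x ∈ W
      rwa [h.range_unit x (hWu hx)]
  have hAs : ∀ a ∈ A, D.source a ∈ A := fun a ha => hWA ha.2.1
  have hAr : ∀ a ∈ A, D.range a ∈ A := fun a ha => hWA ha.2.2
  have hAi : ∀ a ∈ A, D.inv a ∈ A := fun a ha => by
    refine ⟨hKi a ha.1, ?_, ?_⟩
    · change D.source (D.inv a) ∈ W
      rw [h.source_inv]; exact ha.2.2
    · change D.range (D.inv a) ∈ W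
      rw [h.range_inv]; exact ha.2.1
  have hk : ∀ w, ∃ k, w ∈ W → (k ∈ K ∧ D.range k ∈ V) ∧ D.source k = w := by
    intro w
    by_cases hw : w ∈ W
    · obtain ⟨k, hk, hk'⟩ := hw
      exact ⟨k, fun _ => ⟨hk, hk'⟩⟩
    · exact ⟨w, fun h => absurd h hw⟩
  choose k hk using hk
  have hconj : ∀ a, D.range a ∈ W → D.source a ∈ W →
      D.source (k (D.range a)) = D.range a ∧
      D.source (D.mul (k (D.range a)) a) = D.range (D.inv (k (D.source a))) := by
    intro a h1 h2
    refine ⟨(hk _ h1).2, ?_⟩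
    rw [h.source_mul _ _ (hk _ h1).2, h.range_inv, (hk _ h2).2]
  have hbase : ∀ a ∈ A, D.mul (D.mul (k (D.range a)) a) (D.inv (k (D.source a))) ∈ Hs := by
    intro a ha
    obtain ⟨c1, c2⟩ := hconj a ha.2.2 ha.2.1
    refine InSubgroupoid.base ⟨⟨_, ⟨_, (hk _ ha.2.2).1.1, _, ha.1, c1, rfl⟩, _,
      hKi _ (hk _ ha.2.1).1.1, c2, rfl⟩, ?_, ?_⟩
    · rw [h.source_mul _ _ c2, h.source_inv]; exact hVU (hk _ ha.2.1).1.2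
    · rw [h.range_mul _ _ c2, h.range_mul _ _ c1]; exact hVU (hk _ ha.2.2).1.2
  have hpw : ∀ n, ∀ g ∈ auxPow D A n, D.range g ∈ W ∧ D.source g ∈ W := by
    intro n g hg
    have h1 := auxPow_range h hAr n g hg
    have h2 := auxPow_source h hAs n g hg
    refine ⟨?_, ?_⟩
    · have := h1.2.2
      change D.range (D.range g) ∈ W at this
      rwa [h.range_unit _ (h.range_mem g)] at this
    · have := h2.2.2
      change D.range (D.source g) ∈ W at this
      rwa [h.range_unit _ (h.source_mem g)] at this
  have hpow : ∀ n, ∀ g ∈ auxPow D A n,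
      D.mul (D.mul (k (D.range g)) g) (D.inv (k (D.source g))) ∈ Hs := by
    intro n
    induction n with
    | zero => exact hbase
    | succ n ih =>
      rintro _ ⟨g, hg, a, ha, e, rfl⟩
      obtain ⟨g1, g2⟩ := hpw n g hg
      obtain ⟨c1, c2⟩ := hconj g g1 g2
      obtain ⟨c3, c4⟩ := hconj a ha.2.2 ha.2.1
      have key := InSubgroupoid.mul (ih g hg) (hbase a ha) (by
        rw [h.source_mul _ _ c2, h.source_inv, h.range_mul _ _ c4, h.range_mul _ _ c3, e])
      change _ ∈ Hs at key
      convert key using 1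
      rw [h.range_mul _ _ e, h.source_mul _ _ e]
      rw [← h.mul_assoc (D.mul (D.mul (k (D.range g)) g) (D.inv (k (D.source g))))
        (D.mul (k (D.range a)) a) (D.inv (k (D.source a)))
        (by rw [h.source_mul _ _ c2, h.source_inv, h.range_mul _ _ c3, e]) c4]
      congr 1
      rw [h.mul_assoc (D.mul (k (D.range g)) g) (D.inv (k (D.source g))) _ c2
        (by rw [h.source_inv, h.range_mul _ _ c3, e]), e, aux_inv_mul_cancel h _ _ c3,
        h.mul_assoc _ _ _ c1 e]
  let C : Set G := D.setMul (D.setMul K (closure Hs)) K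
  have hCc : IsCompact C := aux_isCompact_setMul h (aux_isCompact_setMul h hKc hH) hKc
  have hAC : ∀ n, auxPow D A n ⊆ C := by
    intro n g hg
    obtain ⟨g1, g2⟩ := hpw n g hg
    obtain ⟨c1, c2⟩ := hconj g g1 g2
    have e1 : D.source (D.inv (k (D.range g))) =
        D.range (D.mul (D.mul (k (D.range g)) g) (D.inv (k (D.source g)))) := by
      rw [h.source_inv, h.range_mul _ _ c2, h.range_mul _ _ c1]
    refine ⟨_, ⟨_, hKi _ (hk _ g1).1.1, _, subset_closure (hpow n g hg), e1, rfl⟩, _,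
      (hk _ g2).1.1, ?_, ?_⟩
    · rw [h.source_mul _ _ e1, h.source_mul _ _ c2, h.source_inv]
    · rw [← h.mul_assoc _ _ _ (by rw [h.source_inv, h.range_mul _ _ c1]) c2,
        aux_inv_mul_cancel h _ _ c1, aux_mul_inv_cancel_mid h _ _ (hk _ g2).2.symm]
  obtain ⟨N, hN⟩ := auxPow_stab h hAs hCc hAC
  have h0 : A ⊆ ⋃ n, auxPow D A n := fun a ha => Set.mem_iUnion.2 ⟨0, ha⟩
  refine ⟨⋃ n, auxPow D A n, ?_, isOpen_iUnion (auxPow_open h hAo), ?_, ?_, ?_, ?_, ?_, ?_⟩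
  · rw [hN]; exact auxPow_compact h hAc N
  · intro g hg
    obtain ⟨n, hn⟩ := Set.mem_iUnion.1 hg
    exact auxPow_inv h hAi n g hn
  · intro g l hg hl e
    obtain ⟨n, hn⟩ := Set.mem_iUnion.1 hg
    obtain ⟨m, hm⟩ := Set.mem_iUnion.1 hl
    exact Set.mem_iUnion.2 ⟨_, auxPow_mul h n m g l hn hm e⟩
  · intro g hg
    obtain ⟨n, hn⟩ := Set.mem_iUnion.1 hg
    exact h0 (auxPow_source h hAs n g hn)
  · intro g hg
    obtain ⟨n, hn⟩ := Set.mem_iUnion.1 hg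
    exact h0 (auxPow_range h hAr n g hn)
  · exact hVW.trans (hWA.trans h0)
  · exact fun g hg hr => h0 ⟨hg, ⟨g, ⟨hg, hr⟩, rfl⟩, hVW hr⟩

end LebesgueAux

end GroupoidData

/-- Let `G` be an ample groupoid with compact unit space whose dynamic asymptotic dimension
is at most `d`.  Then for every compact open subset `K ⊆ G` there exists a `K`-Lebesgue
colouring of `G` with at most `d + 1` elements. -/
theorem exists_lebesgue_colouring_of_dad
    {G : Type u} [TopologicalSpace G] (D : GroupoidData G)
    (hAmple : D.IsAmpleGroupoid) (hcpt : IsCompact D.unitSpace)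
    (d : ℕ) (hdad : D.DadLE d) :
    ∀ K : Set G, IsCompact K → IsOpen K →
      ∃ (e : ℕ), e ≤ d ∧ ∃ C : D.Colouring e, C.IsLebesgue K := by
  intro K hKc hKo
  have := hAmple.t2
  let K1 : Set G := (K ∪ D.inv ⁻¹' K) ∪ D.unitSpace
  have hKu : D.unitSpace ⊆ K1 := Set.subset_union_right
  have hinvK : D.inv ⁻¹' K = D.inv '' K := by
    ext g
    constructor
    · exact fun hg => ⟨D.inv g, hg, GroupoidData.aux_inv_inv hAmple g⟩
    · rintro ⟨k, hk, rfl⟩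
      change D.inv (D.inv k) ∈ K
      rwa [GroupoidData.aux_inv_inv hAmple]
  have hinvu : ∀ x ∈ D.unitSpace, D.inv x = x := by
    intro x hx
    have h1 := hAmple.inv_mul x
    have h2 := hAmple.mul_unit (D.inv x)
    rw [hAmple.source_inv, hAmple.range_unit x hx, h1, hAmple.source_unit x hx] at h2
    exact h2.symm
  have hK1c : IsCompact K1 := by
    refine (hKc.union ?_).union hcpt
    rw [hinvK]; exact hKc.image hAmple.continuous_inv
  have hK1o : IsOpen K1 :=
    (hKo.union (hKo.preimage hAmple.continuous_inv)).union hAmple.open_unitSpace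
  have hKi : ∀ g ∈ K1, D.inv g ∈ K1 := by
    rintro g ((hg | hg) | hg)
    · refine Or.inl (Or.inr ?_)
      change D.inv (D.inv g) ∈ K
      rwa [GroupoidData.aux_inv_inv hAmple]
    · exact Or.inl (Or.inl hg)
    · rw [hinvu g hg]; exact Or.inr hg
  have hLc := GroupoidData.aux_isCompact_setMul hAmple
    (GroupoidData.aux_isCompact_setMul hAmple hK1c hK1c) hK1c
  have hLo := GroupoidData.aux_isOpen_setMul hAmple
    (GroupoidData.aux_isOpen_setMul hAmple hK1o hK1o) hK1o
  obtain ⟨U, hU, hcov, hH⟩ := hdad _ hLo hLc.closure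
  have hXU : D.unitSpace ⊆ ⋃ i, U i := by
    intro x hx
    have hs := hAmple.source_unit x hx
    have hr := hAmple.range_unit x hx
    have hxx : x = D.mul x x := by
      have := hAmple.mul_unit x
      rw [hs] at this
      exact this.symm
    refine hcov (Or.inl ⟨x, ⟨x, ⟨x, hKu hx, x, hKu hx, ?_, hxx⟩, x, hKu hx, ?_, hxx⟩, hr⟩)
    · rw [hs, hr]
    · rw [hs, hr]
  obtain ⟨V, hV, hXV⟩ := GroupoidData.aux_shrink hAmple hcpt U (fun i => (hU i).1) hXU
  have hmain := fun i => GroupoidData.aux_main hAmple hK1c hK1o hKu hKi (hV i).1 (hV i).2.1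
    (hV i).2.2 (hU i).2 (hH i)
  choose S h1 h2 h3 h4 h5 h6 h7 h8 using hmain
  refine ⟨d, le_rfl, ⟨S, h1, h2, h3, h4, h5, h6, ?_⟩, ?_⟩
  · intro x hx
    obtain ⟨i, hi⟩ := Set.mem_iUnion.1 (hXV hx)
    exact Set.mem_iUnion.2 ⟨i, h7 i hi, hx⟩
  · intro x hx
    obtain ⟨i, hi⟩ := Set.mem_iUnion.1 (hXV hx)
    refine ⟨i, ?_⟩
    rintro g ⟨hg, hgK⟩
    refine h8 i g (Or.inl (Or.inl hgK)) ?_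
    have hg' : D.range g = x := hg
    rwa [hg']
end
end

section
/- Let G be a principal ample groupoid with compact unit space, and let K be a compact open subset of G containing G^0. Then there exists a K-Lebesgue colouring (G_0,…,G_d) of G. -/
noncomputable section

open Function Set

attribute [local instance] Classical.propDecidable

universe u v w

namespace GroupoidData

/-- In a principal groupoid an arrow is determined by its source and range. -/
lemma principal_ext {G : Type u} [TopologicalSpace G] {D : GroupoidData G}
    (hA : D.IsAmpleGroupoid) (hP : D.IsPrincipal) {g h : G}
    (hs : D.source g = D.source h) (hr : D.range g = D.range h) : g = h := by
  have c1 : D.source (D.inv g) = D.range h := by rw [hA.source_inv, hr]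
  have s1 : D.source (D.mul (D.inv g) h) = D.source h := hA.source_mul _ _ c1
  have r1 : D.range (D.mul (D.inv g) h) = D.source g := by
    rw [hA.range_mul _ _ c1, hA.range_inv]
  have hu := hP (D.mul (D.inv g) h) (by rw [s1, r1, hs])
  have e : D.mul (D.inv g) h = D.source g := by
    rw [← hA.range_unit _ hu, r1]
  calc g = D.mul g (D.source g) := (hA.mul_unit g).symm
    _ = D.mul g (D.mul (D.inv g) h) := by rw [e]
    _ = D.mul (D.mul g (D.inv g)) h := by
      rw [hA.mul_assoc _ _ _ (hA.range_inv g).symm c1]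
    _ = h := by rw [hA.mul_inv, hr, hA.unit_mul]

/-- The subgroupoid `T⁻¹T`. -/
def towerSub {G : Type u} (D : GroupoidData G) (T : Set G) : Set G :=
  {h | ∃ a ∈ T, ∃ b ∈ T, D.range a = D.range b ∧ D.source a = D.range h ∧
    D.source b = D.source h}

lemma towerSub_isCompact {G : Type u} [TopologicalSpace G] {D : GroupoidData G}
    (hA : D.IsAmpleGroupoid) (hP : D.IsPrincipal) {T : Set G} (hT : IsCompact T) :
    IsCompact (D.towerSub T) := by
  haveI := hA.t2
  have hrc : Continuous D.range := hA.etale_range.continuous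
  have hc : IsCompact ((T ×ˢ T) ∩ {p : G × G | D.range p.1 = D.range p.2}) :=
    (hT.prod hT).inter_right
      (isClosed_eq (hrc.comp continuous_fst) (hrc.comp continuous_snd))
  have hcont : ContinuousOn (fun p : G × G => D.mul (D.inv p.1) p.2)
      ((T ×ˢ T) ∩ {p : G × G | D.range p.1 = D.range p.2}) := by
    rw [continuousOn_iff_continuous_restrict]
    have key : Continuous (fun p : ↥((T ×ˢ T) ∩ {p : G × G | D.range p.1 = D.range p.2}) =>
        (⟨(D.inv p.1.1, p.1.2), by
          have := p.2.2
          simp only [mem_setOf_eq] at this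
          simp only [hA.source_inv, this]⟩ :
          {p : G × G // D.source p.1 = D.range p.2})) := by
      apply Continuous.subtype_mk
      exact (hA.continuous_inv.comp (continuous_fst.comp continuous_subtype_val)).prodMk
        (continuous_snd.comp continuous_subtype_val)
    exact hA.continuous_mul.comp key
  convert hc.image_of_continuousOn hcont using 1
  ext h
  constructor
  · rintro ⟨a, ha, b, hb, h1, h2, h3⟩
    have c1 : D.source (D.inv a) = D.range b := by rw [hA.source_inv, h1]
    refine ⟨(a, b), ⟨⟨ha, hb⟩, h1⟩, principal_ext hA hP ?_ ?_⟩
    · simp only [hA.source_mul _ _ c1, h3]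
    · simp only [hA.range_mul _ _ c1, hA.range_inv, h2]
  · rintro ⟨⟨a, b⟩, ⟨⟨ha, hb⟩, h1⟩, rfl⟩
    have c1 : D.source (D.inv a) = D.range b := by rw [hA.source_inv]; exact h1
    refine ⟨a, ha, b, hb, h1, ?_, ?_⟩
    · simp only [hA.range_mul _ _ c1, hA.range_inv]
    · simp only [hA.source_mul _ _ c1]

lemma towerSub_isOpen {G : Type u} [TopologicalSpace G] {D : GroupoidData G}
    (hA : D.IsAmpleGroupoid) (hP : D.IsPrincipal) {T : Set G} (hT : IsOpen T) :
    IsOpen (D.towerSub T) := by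
  rw [isOpen_iff_mem_nhds]
  rintro h ⟨a, ha, b, hb, h1, h2, h3⟩
  have hsc : Continuous D.source := hA.etale_source.continuous
  let φ : {p : G × G // D.source p.1 = D.source p.2} → G :=
    fun p => D.mul p.1.2 (D.inv p.1.1)
  have hφ : Continuous φ := by
    have key : Continuous (fun p : {p : G × G // D.source p.1 = D.source p.2} =>
        (⟨(p.1.2, D.inv p.1.1), by simp only [hA.range_inv, p.2]⟩ :
          {p : G × G // D.source p.1 = D.range p.2})) := by
      apply Continuous.subtype_mk
      exact (continuous_snd.comp continuous_subtype_val).prodMk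
        (hA.continuous_inv.comp (continuous_fst.comp continuous_subtype_val))
    exact hA.continuous_mul.comp key
  have c0 : D.source b = D.range (D.inv h) := by rw [hA.range_inv, h3]
  have hφ0 : φ ⟨(h, b), h3.symm⟩ = a := by
    apply principal_ext hA hP
    · simp only [φ, hA.source_mul _ _ c0, hA.source_inv, h2]
    · simp only [φ, hA.range_mul _ _ c0, h1]
  obtain ⟨O, hO, hOe⟩ := isOpen_induced_iff.1 (hT.preimage hφ)
  have hmem : (h, b) ∈ O := by
    have : (⟨(h, b), h3.symm⟩ : {p : G × G // D.source p.1 = D.source p.2}) ∈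
        Subtype.val ⁻¹' O := by
      rw [hOe]; simp only [mem_preimage, hφ0, ha]
    exact this
  obtain ⟨N, M, hN, hM, hhN, hbM, hNM⟩ := isOpen_prod_iff.1 hO h b hmem
  have hS : IsOpen (D.source '' (M ∩ T)) := hA.etale_source.isOpenMap _ (hM.inter hT)
  refine Filter.mem_of_superset
    ((hN.inter (hS.preimage hsc)).mem_nhds ⟨hhN, b, ⟨hbM, hb⟩, h3⟩) ?_
  rintro k ⟨hkN, b', ⟨hb'M, hb'T⟩, hk⟩
  have hin : (⟨(k, b'), hk.symm⟩ : {p : G × G // D.source p.1 = D.source p.2}) ∈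
      φ ⁻¹' T := by
    rw [← hOe]; exact hNM ⟨hkN, hb'M⟩
  have c1 : D.source b' = D.range (D.inv k) := by rw [hA.range_inv, hk]
  refine ⟨D.mul b' (D.inv k), hin, b', hb'T, ?_, ?_, hk⟩
  · rw [hA.range_mul _ _ c1]
  · rw [hA.source_mul _ _ c1, hA.source_inv]

/-- Around every unit `x` the source map is injective on `K ∩ r⁻¹(V)` for some small `V`. -/
lemma exists_good_nhd {G : Type u} [TopologicalSpace G] {D : GroupoidData G}
    (hA : D.IsAmpleGroupoid) (hP : D.IsPrincipal) {K : Set G} (hK : IsCompact K) (x : G) :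
    ∃ V : Set G, x ∈ V ∧ IsOpen V ∧ IsCompact V ∧
      Set.InjOn D.source (K ∩ D.range ⁻¹' V) := by
  haveI := hA.t2
  have hsc : Continuous D.source := hA.etale_source.continuous
  have hrc : Continuous D.range := hA.etale_range.continuous
  -- the open set of pairs lying in a common open set on which the source is injective
  let Ω : Set (G × G) := ⋃ B ∈ {B : Set G | IsOpen B ∧ Set.InjOn D.source B}, B ×ˢ B
  have hΩ : IsOpen Ω := isOpen_biUnion fun B hB => hB.1.prod hB.1
  have hE : IsCompact (((K ×ˢ K) ∩ {p : G × G | D.source p.1 = D.source p.2}) \ Ω) :=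
    ((hK.prod hK).inter_right
      (isClosed_eq (hsc.comp continuous_fst) (hsc.comp continuous_snd))).diff hΩ
  have hF := (hE.image ((hrc.comp continuous_fst).prodMk (hrc.comp continuous_snd))).isClosed
  have hx : (x, x) ∉ (fun p : G × G => (D.range p.1, D.range p.2)) ''
      (((K ×ˢ K) ∩ {p : G × G | D.source p.1 = D.source p.2}) \ Ω) := by
    rintro ⟨⟨g, h⟩, ⟨⟨-, hs⟩, hn⟩, he⟩
    simp only [Prod.mk.injEq] at he
    have hgh : g = h := principal_ext hA hP hs (he.1.trans he.2.symm)
    subst hgh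
    obtain ⟨B, hgB, -, hBo, -, hBb⟩ := hA.ample g univ isOpen_univ (mem_univ _)
    exact hn (mem_biUnion (show B ∈ {B : Set G | IsOpen B ∧ Set.InjOn D.source B} from
      ⟨hBo, hBb.1⟩) ⟨hgB, hgB⟩)
  obtain ⟨N, M, hN, hM, hxN, hxM, hNM⟩ := isOpen_prod_iff.1 hF.isOpen_compl x x hx
  obtain ⟨V, hxV, hVs, hVo, hVc, -⟩ := hA.ample x (N ∩ M) (hN.inter hM) ⟨hxN, hxM⟩
  refine ⟨V, hxV, hVo, hVc, ?_⟩
  rintro g ⟨hgK, hgV⟩ h ⟨hhK, hhV⟩ hs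
  by_contra hne
  have hno : (g, h) ∉ Ω := by
    intro hmem
    simp only [Ω, mem_iUnion, mem_setOf_eq] at hmem
    obtain ⟨B, ⟨-, hB⟩, h1, h2⟩ := hmem
    exact hne (hB h1 h2 hs)
  exact hNM (show (D.range g, D.range h) ∈ N ×ˢ M from ⟨(hVs hgV).1, (hVs hhV).2⟩)
    ⟨(g, h), ⟨⟨⟨hgK, hhK⟩, hs⟩, hno⟩, rfl⟩

end GroupoidData

/-- Let `G` be a principal ample groupoid with compact unit space, and let `K` be a compact
open subset of `G` containing `G⁰`.  Then there exists a `K`-Lebesgue colouring of `G`. -/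
theorem exists_lebesgue_colouring_of_principal
    {G : Type u} [TopologicalSpace G] (D : GroupoidData G)
    (hAmple : D.IsAmpleGroupoid) (hPrincipal : D.IsPrincipal)
    (hcpt : IsCompact D.unitSpace)
    (K : Set G) (hKc : IsCompact K) (hKo : IsOpen K) (hKu : D.unitSpace ⊆ K) :
    ∃ (d : ℕ) (C : D.Colouring d), C.IsLebesgue K := by
  haveI := hAmple.t2
  choose V hxV hVo hVc hVi using GroupoidData.exists_good_nhd hAmple hPrincipal hKc
  have hrc : Continuous D.range := hAmple.etale_range.continuous
  obtain ⟨t, ht⟩ := hcpt.elim_finite_subcover V hVo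
    (fun x _ => mem_iUnion.2 ⟨x, hxV x⟩)
  -- index the pieces by `Fin (t.card + 1)`, the first piece being empty
  let W : Fin (t.card + 1) → Set G := Fin.cons ∅ (fun i => V (t.equivFin.symm i).1)
  have hW : ∀ i, IsOpen (W i) ∧ IsCompact (W i) ∧
      Set.InjOn D.source (K ∩ D.range ⁻¹' (W i)) := by
    intro i
    refine Fin.cases ?_ (fun j => ?_) i
    · simp [W]
    · exact ⟨hVo _, hVc _, hVi _⟩
  have hcov : ∀ x ∈ D.unitSpace, ∃ i, x ∈ W i := by
    intro x hx
    obtain ⟨y, hy, hxy⟩ := mem_iUnion₂.1 (ht hx)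
    refine ⟨Fin.succ (t.equivFin ⟨y, hy⟩), ?_⟩
    simpa [W] using hxy
  have hsub : ∀ x ∈ D.unitSpace, ∀ i, x ∈ W i →
      {g | D.range g = x} ∩ K ⊆ D.towerSub (K ∩ D.range ⁻¹' (W i)) := by
    rintro x hx i hi g ⟨hg, hgK⟩
    have hg' : D.range g = x := hg
    refine ⟨x, ⟨hKu hx, ?_⟩, g, ⟨hgK, ?_⟩, ?_, ?_, rfl⟩
    · simpa only [mem_preimage, hAmple.range_unit x hx] using hi
    · simpa only [mem_preimage, hg'] using hi
    · rw [hAmple.range_unit x hx, hg']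
    · rw [hAmple.source_unit x hx, hg']
  refine ⟨t.card, ⟨fun i => D.towerSub (K ∩ D.range ⁻¹' (W i)), ?_, ?_, ?_, ?_, ?_, ?_, ?_⟩, ?_⟩
  · exact fun i => GroupoidData.towerSub_isCompact hAmple hPrincipal
      (hKc.inter_right ((hW i).2.1.isClosed.preimage hrc))
  · exact fun i => GroupoidData.towerSub_isOpen hAmple hPrincipal
      (hKo.inter ((hW i).1.preimage hrc))
  · rintro i g ⟨a, ha, b, hb, h1, h2, h3⟩
    exact ⟨b, hb, a, ha, h1.symm, by rw [hAmple.range_inv, h3], by rw [hAmple.source_inv, h2]⟩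
  · rintro i g h ⟨a, ha, b, hb, h1, h2, h3⟩ ⟨c, hc, e, he, h4, h5, h6⟩ hgh
    have hbc : b = c := (hW i).2.2 hb hc (by rw [h3, h5, hgh])
    subst hbc
    exact ⟨a, ha, e, he, h1.trans h4, by rw [hAmple.range_mul _ _ hgh, h2],
      by rw [hAmple.source_mul _ _ hgh, h6]⟩
  · rintro i g ⟨a, ha, b, hb, h1, h2, h3⟩
    exact ⟨b, hb, b, hb, rfl, by rw [hAmple.range_unit _ (hAmple.source_mem g), h3],
      by rw [hAmple.source_unit _ (hAmple.source_mem g), h3]⟩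
  · rintro i g ⟨a, ha, b, hb, h1, h2, h3⟩
    exact ⟨a, ha, a, ha, rfl, by rw [hAmple.range_unit _ (hAmple.range_mem g), h2],
      by rw [hAmple.source_unit _ (hAmple.range_mem g), h2]⟩
  · intro x hx
    obtain ⟨i, hi⟩ := hcov x hx
    exact mem_iUnion.2 ⟨i, hsub x hx i hi ⟨hAmple.range_unit x hx, hKu hx⟩, hx⟩
  · intro x hx
    obtain ⟨i, hi⟩ := hcov x hx
    exact ⟨i, hsub x hx i hi⟩
end
end
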